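/- Let k ≥ 1 and let H be a C_{2k+1}-decomposable graph, where C_{2k+1} is the cycle on 2k+1 vertices. Then for every η > 0 there exists ρ > 0 and n₀ such that for every d ∈ (0,1] and every (ρ,d)-dense graph G with at least n₀ vertices, t_H(G) ≥ d^{|E(H)|} − η. -/

import Mathlib

open MeasureTheory

/-- The homomorphism density `t_H(G)`. -/
noncomputable def homDensity {α β : Type*} [Fintype α] [Fintype β]
    (H : SimpleGraph α) (G : SimpleGraph β) : ℝ :=
  (Nat.card (H →g G) : ℝ) / (Fintype.card β : ℝ) ^ (Fintype.card α)

/-- The number of edges of a graph. -/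
noncomputable def edgeCount {α : Type*} (H : SimpleGraph α) : ℕ :=
  Nat.card H.edgeSet

/-- `G` is `(ρ,d)`-dense: every vertex subset `X` with `|X| ≥ ρ|V(G)|`
spans at least `(d/2)|X|²` edges. -/
def LocallyDense {β : Type*} [Fintype β] (G : SimpleGraph β) (ρ d : ℝ) : Prop :=
  ∀ X : Finset β, ρ * (Fintype.card β : ℝ) ≤ (X.card : ℝ) →
    d / 2 * (X.card : ℝ) ^ 2 ≤
      (Nat.card {e : Sym2 β // e ∈ G.edgeSet ∧ ∀ v ∈ e, v ∈ X} : ℝ)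

/-- `(bag, T)` is a tree decomposition of `H`. -/
def IsTreeDecomp {α ι : Type*} [DecidableEq α] (H : SimpleGraph α) (bag : ι → Finset α)
    (T : SimpleGraph ι) : Prop :=
  T.IsTree ∧
  (∀ v : α, ∃ X, v ∈ bag X) ∧
  (∀ u v : α, H.Adj u v → ∃ X, u ∈ bag X ∧ v ∈ bag X) ∧
  (∀ X Y Z : ι, ∀ p : T.Walk X Y, p.IsPath → Z ∈ p.support →
    bag X ∩ bag Y ⊆ bag Z)

/-- `(bag, T)` is a `J`-decomposition of `H`: a tree decomposition in which every
bag induces a copy of `J`, and for adjacent bags there is an isomorphism between the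
induced copies of `J` fixing the intersection pointwise. -/
def IsJDecomp {α ι γ : Type*} [DecidableEq α] (H : SimpleGraph α) (J : SimpleGraph γ)
    (bag : ι → Finset α) (T : SimpleGraph ι) : Prop :=
  IsTreeDecomp H bag T ∧
  (∀ X : ι, Nonempty (H.induce ↑(bag X) ≃g J)) ∧
  (∀ X Y : ι, T.Adj X Y → ∃ e : H.induce ↑(bag X) ≃g H.induce ↑(bag Y),
      ∀ (v : α) (h1 : v ∈ bag X) (h2 : v ∈ bag Y),
        ((e ⟨v, h1⟩ : ↑(bag Y)) : α) = v)

/-- `H` is `J`-decomposable. -/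
def JDecomposable {α γ : Type*} [DecidableEq α] (H : SimpleGraph α) (J : SimpleGraph γ) : Prop :=
  ∃ (ι : Type) (_ : Fintype ι) (bag : ι → Finset α) (T : SimpleGraph ι),
    IsJDecomp H J bag T

/-!
For sets, local density says `⟨A 1_X, 1_X⟩ ≥ d (𝔼 1_X)² - ρ²`, where `A` is the normalised adjacency
operator of `G`. The diagonal of `A` vanishes, so `d (𝔼 f)² - ⟨A f, f⟩` is convex in each value of
`f` and the inequality extends to all `f : V(G) → [0, 1]`. Taking `f = A ^ (k - 1) K_v`, where `K_v`
is the indicator of the neighbourhood of `v`, and averaging over `v` bounds the density of the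
`(2k + 1)`-cycle below by `d w_{2k} - ρ²`, where `w_j = ⟨A ^ j 1, 1⟩`. Write `w_{2k} = θ ^ (2k)`.
Log-convexity of `j ↦ w_{2j}` gives `w_j ≤ θ ^ j` for `j ≤ 2k`, so a proper induced subgraph of the
cycle with `e` edges, being a union of paths, has density at most `θ ^ e`. As `d ≤ w_1 ≤ θ`, its
density times `d ^ (2k + 1 - e)` is at most `d θ ^ (2k)`, which is hardly more than that of the
cycle.

To bound the density of `H`, take a uniform homomorphism from each bag of the decomposition. The
isomorphisms fixing the intersections make the marginals of adjacent bags agree, so these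
distributions can be glued along the tree, independently given the intersections, to a random
homomorphism from `H`. Its entropy is the sum of the entropies of the bags minus those of the
marginals on the intersections. The former are the logarithms of the cycle densities, and by
Gibbs' inequality the latter are at most the logarithms of the densities of the graphs induced on
the intersections. Hence each bag beyond the first multiplies the bound on the density by the ratio
of a cycle density to that of one of its induced subgraphs.
-/

open Finset
open scoped BigOperators

section UniformEntropy

variable {Ω : Type*} [Fintype Ω]

/-- The density of `A`, i.e. its probability under the uniform distribution on `Ω`. -/
noncomputable def setDensity (A : Set Ω) : ℝ :=
  𝔼 ω, A.indicator 1 ω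

/-- The density of the uniform distribution on `A` with respect to the uniform distribution on
`Ω`; identically zero if `A` is empty. -/
noncomputable def uniformDensity (A : Set Ω) : Ω → ℝ :=
  A.indicator fun _ ↦ (setDensity A)⁻¹

/-- The entropy of a probability density `f` relative to the uniform distribution on `Ω`, so that
it is at most `0`, and equal to `log (setDensity A)` for the uniform distribution on `A`. -/
noncomputable def entropy (f : Ω → ℝ) : ℝ :=
  𝔼 ω, Real.negMulLog (f ω)

lemma setDensity_nonneg (A : Set Ω) : 0 ≤ setDensity A :=
  expect_nonneg fun ω _ ↦ Set.indicator_nonneg (fun _ _ ↦ zero_le_one) ω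

lemma setDensity_mono {A B : Set Ω} (h : A ⊆ B) : setDensity A ≤ setDensity B :=
  expect_le_expect fun _ _ ↦ Set.indicator_le_indicator_of_subset h (fun _ ↦ zero_le_one) _

lemma setDensity_pos_of_mem {A : Set Ω} {ω : Ω} (h : ω ∈ A) : 0 < setDensity A :=
  expect_pos' (fun _ _ ↦ Set.indicator_nonneg (fun _ _ ↦ zero_le_one) _)
    ⟨ω, mem_univ ω, by simp [h]⟩

lemma setDensity_eq_card_div (A : Set Ω) :
    setDensity A = (Nat.card A : ℝ) / Fintype.card Ω := by
  classical
  rw [setDensity, Fintype.expect_eq_sum_div_card, sum_indicator_eq_sum_filter]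
  simp [Nat.card_eq_fintype_card, Fintype.card_subtype]

lemma uniformDensity_nonneg (A : Set Ω) (ω : Ω) : 0 ≤ uniformDensity A ω :=
  Set.indicator_nonneg (fun _ _ ↦ inv_nonneg.2 (setDensity_nonneg A)) ω

lemma expect_uniformDensity {A : Set Ω} (hA : 0 < setDensity A) :
    𝔼 ω, uniformDensity A ω = 1 := by
  have h ω : uniformDensity A ω = (setDensity A)⁻¹ * A.indicator 1 ω := by
    by_cases hω : ω ∈ A <;> simp [uniformDensity, hω]
  simp only [h, ← mul_expect]
  exact inv_mul_cancel₀ hA.ne'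

lemma entropy_uniformDensity {A : Set Ω} (hA : 0 < setDensity A) :
    entropy (uniformDensity A) = Real.log (setDensity A) := by
  have h ω : Real.negMulLog (uniformDensity A ω) =
      uniformDensity A ω * Real.log (setDensity A) := by
    by_cases hω : ω ∈ A <;> simp [uniformDensity, hω, Real.negMulLog]
  simp only [entropy, h, ← expect_mul, expect_uniformDensity hA, one_mul]

lemma exp_entropy_le_setDensity {A : Set Ω} {f : Ω → ℝ} (hf : ∀ ω, 0 ≤ f ω)
    (hf_sum : 𝔼 ω, f ω = 1) (hf_supp : ∀ ω, f ω ≠ 0 → ω ∈ A) :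
    Real.exp (entropy f) ≤ setDensity A := by
  obtain ⟨ω₀, -, hω₀⟩ := exists_ne_zero_of_expect_ne_zero (hf_sum.trans_ne one_ne_zero)
  have hA : 0 < setDensity A := setDensity_pos_of_mem (hf_supp ω₀ hω₀)
  have h ω : Real.negMulLog (f ω) ≤
      f ω * Real.log (setDensity A) + (uniformDensity A ω - f ω) := by
    by_cases hω : ω ∈ A
    · have := mul_le_mul_of_nonneg_left
        (Real.negMulLog_le_one_sub_self (mul_nonneg (hf ω) hA.le)) (inv_nonneg.2 hA.le)
      simp only [Real.negMulLog_mul, uniformDensity, Set.indicator_of_mem hω] at this ⊢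
      simp only [Real.negMulLog] at this ⊢
      field_simp at this ⊢
      linarith
    · have hf0 : f ω = 0 := by_contra fun h ↦ hω (hf_supp ω h)
      simp [hf0, uniformDensity, hω]
  rw [← Real.le_log_iff_exp_le hA]
  calc entropy f
      ≤ 𝔼 ω, (f ω * Real.log (setDensity A) + (uniformDensity A ω - f ω)) :=
        expect_le_expect fun ω _ ↦ h ω
    _ = Real.log (setDensity A) := by
        rw [expect_add_distrib, expect_sub_distrib, ← expect_mul, hf_sum,
          expect_uniformDensity hA, sub_self, add_zero, one_mul]

end UniformEntropy

section CondAvg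

variable {α β : Type*} [Fintype α] [DecidableEq α] [Fintype β] {S A B : Finset α}
  {f g : (α → β) → ℝ}

/-- The conditional expectation of `f` given the coordinates in `S`, under the uniform distribution
on `α → β`. It is the density of the marginal on `S` of a distribution with density `f`, regarded
as a function on all of `α → β`. -/
noncomputable def condAvg (S : Finset α) (f : (α → β) → ℝ) (φ : α → β) : ℝ :=
  𝔼 ψ, f (S.piecewise φ ψ)

lemma condAvg_nonneg (hf : ∀ φ, 0 ≤ f φ) (φ : α → β) : 0 ≤ condAvg S f φ :=
  expect_nonneg fun _ _ ↦ hf _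

lemma eq_zero_of_condAvg_eq_zero (hf : ∀ φ, 0 ≤ f φ) {φ : α → β} (h : condAvg S f φ = 0) :
    f φ = 0 := by
  rw [condAvg, expect_eq_zero_iff_of_nonneg fun _ _ ↦ hf _] at h
  simpa only [piecewise_same] using h φ (mem_univ φ)

lemma dependsOn_condAvg (S : Finset α) (f : (α → β) → ℝ) : DependsOn (condAvg S f) S := by
  intro φ ψ h
  refine expect_congr rfl fun χ _ ↦ congrArg f ?_
  exact S.piecewise_congr h fun _ _ ↦ rfl

lemma condAvg_of_dependsOn [Nonempty β] (hf : DependsOn f S) : condAvg S f = f := by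
  ext φ
  have h ψ : f (S.piecewise φ ψ) = f φ := hf fun _ hi ↦ piecewise_eq_of_mem _ _ _ hi
  simp only [condAvg, h, Fintype.expect_const]

lemma condAvg_mul (hf : DependsOn f S) (g : (α → β) → ℝ) (φ : α → β) :
    condAvg S (fun ψ ↦ f ψ * g ψ) φ = f φ * condAvg S g φ := by
  have h ψ : f (S.piecewise φ ψ) = f φ := hf fun _ hi ↦ piecewise_eq_of_mem _ _ _ hi
  simp only [condAvg, h, mul_expect]

lemma expect_condAvg [Nonempty β] (S : Finset α) (f : (α → β) → ℝ) :
    𝔼 φ, condAvg S f φ = 𝔼 φ, f φ := by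
  let swap : (α → β) × (α → β) → (α → β) × (α → β) := fun p ↦
    (S.piecewise p.1 p.2, S.piecewise p.2 p.1)
  have swap_swap : Function.Involutive swap := fun p ↦ by
    ext i <;> by_cases hi : i ∈ S <;> simp [swap, hi]
  calc 𝔼 φ, condAvg S f φ
      = 𝔼 p, f (swap p).1 := by
        rw [← univ_product_univ, expect_product]
        rfl
    _ = 𝔼 p : (α → β) × (α → β), f p.1 :=
        Fintype.expect_equiv swap_swap.toPerm _ _ fun _ ↦ rfl
    _ = 𝔼 φ, f φ := by
        rw [← univ_product_univ, expect_product]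
        simp only [Fintype.expect_const]

lemma condAvg_condAvg [Nonempty β] (A B : Finset α) (f : (α → β) → ℝ) :
    condAvg A (condAvg B f) = condAvg (A ∩ B) f := by
  ext φ
  have h ψ χ : B.piecewise (A.piecewise φ ψ) χ =
      (A ∩ B).piecewise φ (B.piecewise ψ χ) := by
    ext i
    by_cases hA : i ∈ A <;> by_cases hB : i ∈ B <;> simp [hA, hB]
  simp only [condAvg, h]
  exact expect_condAvg B fun θ ↦ f ((A ∩ B).piecewise φ θ)

lemma condAvg_eq_condAvg_inter [Nonempty β] (A : Finset α) (hf : DependsOn f B) :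
    condAvg A f = condAvg (A ∩ B) f := by
  rw [← condAvg_condAvg, condAvg_of_dependsOn hf]

lemma expect_mul_condAvg [Nonempty β] (hf : DependsOn f S) (g : (α → β) → ℝ) :
    𝔼 φ, f φ * condAvg S g φ = 𝔼 φ, f φ * g φ := by
  simp only [← condAvg_mul hf]
  exact expect_condAvg S _

lemma condAvg_comp_perm (σ : Equiv.Perm α) (hσ : ∀ i ∈ S, σ i = i) (f : (α → β) → ℝ) :
    condAvg S (fun φ ↦ f (φ ∘ σ)) = condAvg S f := by
  ext φ
  refine Fintype.expect_equiv (σ.symm.arrowCongr (Equiv.refl β)) _ _ fun ψ ↦ congrArg f ?_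
  ext i
  have hmem : σ i ∈ S ↔ i ∈ S :=
    ⟨fun h ↦ by rwa [← σ.injective (hσ _ h)], fun h ↦ by rwa [hσ i h]⟩
  by_cases hi : i ∈ S
  · simp [piecewise, hi, hσ i hi]
  · simp [piecewise, hi, hmem]

lemma expect_comp_embedding [Nonempty β] {γ : Type*} [Fintype γ] [DecidableEq γ] (e : γ ↪ α)
    (F : (γ → β) → ℝ) : 𝔼 φ : α → β, F (φ ∘ e) = 𝔼 ψ, F ψ := by
  let split := Equiv.piEquivPiSubtypeProd (· ∈ Set.range e) fun _ : α ↦ β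
  let onRange : γ ≃ Set.range e := Equiv.ofInjective e e.injective
  calc 𝔼 φ : α → β, F (φ ∘ e)
      = 𝔼 p : (Set.range e → β) × ({i // i ∉ Set.range e} → β), F (p.1 ∘ onRange) :=
        Fintype.expect_equiv split _ _ fun _ ↦ rfl
    _ = 𝔼 χ : Set.range e → β, F (χ ∘ onRange) := by
        rw [← univ_product_univ, expect_product]
        simp only [Fintype.expect_const]
    _ = 𝔼 ψ, F ψ :=
        Fintype.expect_equiv (onRange.arrowCongr (Equiv.refl β)).symm _ _ fun _ ↦ rfl

end CondAvg

section Glue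

variable {α β : Type*} [Fintype α] [DecidableEq α] [Fintype β] {V W S : Finset α}
  {f g : (α → β) → ℝ}

/-- The conditionally independent coupling over the coordinates in `S` of two distributions with
densities `f` and `g` that have the same marginal on `S`. The value `0` that division by zero gives
where this marginal vanishes is the intended one. -/
noncomputable def glue (S : Finset α) (f g : (α → β) → ℝ) (φ : α → β) : ℝ :=
  f φ * g φ / condAvg S f φ

lemma glue_nonneg (hf : ∀ φ, 0 ≤ f φ) (hg : ∀ φ, 0 ≤ g φ) (φ : α → β) : 0 ≤ glue S f g φ :=
  div_nonneg (mul_nonneg (hf φ) (hg φ)) (condAvg_nonneg hf φ)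

lemma glue_comm (h : condAvg S f = condAvg S g) : glue S f g = glue S g f := by
  ext φ
  rw [glue, glue, h, mul_comm]

lemma dependsOn_glue (hf : DependsOn f V) (hg : DependsOn g W) (hS : S ⊆ V) :
    DependsOn (glue S f g) (V ∪ W : Finset α) := by
  intro φ ψ h
  have hV : ∀ i ∈ V, φ i = ψ i := fun i hi ↦ h i (mem_coe.2 (mem_union_left W hi))
  have hW : ∀ i ∈ W, φ i = ψ i := fun i hi ↦ h i (mem_coe.2 (mem_union_right V hi))
  rw [glue, glue, hf hV, hg hW, dependsOn_condAvg S f fun i hi ↦ hV i (hS hi)]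

lemma condAvg_glue_left [Nonempty β] (hf : ∀ φ, 0 ≤ f φ) (hfV : DependsOn f V)
    (hgW : DependsOn g W) (h : condAvg (V ∩ W) f = condAvg (V ∩ W) g) :
    condAvg V (glue (V ∩ W) f g) = f := by
  have hdep : DependsOn (fun φ ↦ f φ / condAvg (V ∩ W) f φ) V := fun φ ψ hφψ ↦ by
    simp only [hfV hφψ, (dependsOn_condAvg _ f).mono (coe_subset.2 inter_subset_left) hφψ]
  ext φ
  calc condAvg V (glue (V ∩ W) f g) φ
      = condAvg V (fun ψ ↦ f ψ / condAvg (V ∩ W) f ψ * g ψ) φ := by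
        simp only [glue, div_mul_eq_mul_div, condAvg]
    _ = f φ / condAvg (V ∩ W) f φ * condAvg (V ∩ W) f φ := by
        rw [condAvg_mul hdep, condAvg_eq_condAvg_inter V hgW, h]
    _ = f φ := div_mul_cancel_of_imp (eq_zero_of_condAvg_eq_zero hf)

lemma condAvg_glue_right [Nonempty β] (hg : ∀ φ, 0 ≤ g φ) (hfV : DependsOn f V)
    (hgW : DependsOn g W) (h : condAvg (V ∩ W) f = condAvg (V ∩ W) g) :
    condAvg W (glue (V ∩ W) f g) = g := by
  rw [glue_comm h]
  rw [inter_comm] at h ⊢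
  exact condAvg_glue_left hg hgW hfV h.symm

lemma negMulLog_glue (φ : α → β) :
    Real.negMulLog (glue S f g φ) =
      Real.log (condAvg S f φ) * glue S f g φ
        - Real.log (f φ) * glue S f g φ - Real.log (g φ) * glue S f g φ := by
  by_cases h : glue S f g φ = 0
  · simp [h]
  · obtain ⟨hfg, hS⟩ := div_ne_zero_iff.1 h
    obtain ⟨hf, hg⟩ := mul_ne_zero_iff.1 hfg
    have hlog : Real.log (glue S f g φ) =
        Real.log (f φ) + Real.log (g φ) - Real.log (condAvg S f φ) := by
      rw [glue, Real.log_div hfg hS, Real.log_mul hf hg]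
    rw [Real.negMulLog, hlog]
    ring

lemma expect_log_mul [Nonempty β] (hf : DependsOn f S) (hg : condAvg S g = f) :
    𝔼 φ, Real.log (f φ) * g φ = -entropy f := by
  have hdep : DependsOn (fun φ ↦ Real.log (f φ)) S := fun φ ψ h ↦ congrArg Real.log (hf h)
  rw [← expect_mul_condAvg hdep, hg, entropy, ← expect_neg_distrib]
  exact expect_congr rfl fun φ _ ↦ by rw [Real.negMulLog]; ring

lemma entropy_glue [Nonempty β] (hf : ∀ φ, 0 ≤ f φ) (hg : ∀ φ, 0 ≤ g φ) (hfV : DependsOn f V)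
    (hgW : DependsOn g W) (h : condAvg (V ∩ W) f = condAvg (V ∩ W) g) :
    entropy (glue (V ∩ W) f g) = entropy f + entropy g - entropy (condAvg (V ∩ W) g) := by
  have hinter : condAvg (V ∩ W) (glue (V ∩ W) f g) = condAvg (V ∩ W) f :=
    calc condAvg (V ∩ W) (glue (V ∩ W) f g)
        = condAvg (V ∩ W ∩ V) (glue (V ∩ W) f g) := by rw [inter_eq_left.2 inter_subset_left]
      _ = condAvg (V ∩ W) (condAvg V (glue (V ∩ W) f g)) := (condAvg_condAvg _ _ _).symm
      _ = condAvg (V ∩ W) f := by rw [condAvg_glue_left hf hfV hgW h]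
  rw [entropy]
  simp only [negMulLog_glue, expect_sub_distrib]
  rw [expect_log_mul (dependsOn_condAvg _ _) hinter,
    expect_log_mul hfV (condAvg_glue_left hf hfV hgW h),
    expect_log_mul hgW (condAvg_glue_right hg hfV hgW h), h]
  ring

end Glue

section EdgeMaps

variable {α β γ : Type*}

open Classical in
/-- The edges of `H` with both ends in `S`. -/
noncomputable def edgesIn (H : SimpleGraph α) (S : Finset α) : Finset (Sym2 α) :=
  {e ∈ S.sym2 | e ∈ H.edgeSet}

/-- The maps that send each pair in `F` to an edge of `G`. For `F = edgesIn H S`, these are the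
maps whose restriction to `S` is a homomorphism from `H[S]` to `G`. -/
def edgeMaps (F : Finset (Sym2 α)) (G : SimpleGraph β) : Set (α → β) :=
  {φ | ∀ e ∈ F, e.map φ ∈ G.edgeSet}

variable {H : SimpleGraph α} {G : SimpleGraph β} {J : SimpleGraph γ} {S T : Finset α}

lemma mem_edgesIn {e : Sym2 α} : e ∈ edgesIn H S ↔ (∀ v ∈ e, v ∈ S) ∧ e ∈ H.edgeSet := by
  simp only [edgesIn, mem_filter, mem_sym2_iff]

lemma mk_mem_edgesIn {u v : α} : s(u, v) ∈ edgesIn H S ↔ (u ∈ S ∧ v ∈ S) ∧ H.Adj u v := by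
  simp only [edgesIn, mem_filter, mk_mem_sym2_iff, SimpleGraph.mem_edgeSet]

lemma edgesIn_subset_sym2 : edgesIn H S ⊆ S.sym2 :=
  fun _ he ↦ mem_sym2_iff.2 (mem_edgesIn.1 he).1

lemma edgesIn_mono (h : S ⊆ T) : edgesIn H S ⊆ edgesIn H T := fun e he ↦ by
  rw [mem_edgesIn] at he ⊢
  exact ⟨fun v hv ↦ h (he.1 v hv), he.2⟩

lemma edgesIn_inter [DecidableEq α] (S T : Finset α) :
    edgesIn H (S ∩ T) = edgesIn H S ∩ edgesIn H T := by
  ext e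
  simp only [mem_inter, mem_edgesIn]
  grind

lemma edgesIn_empty : edgesIn H ∅ = ∅ := by
  simp [edgesIn]

lemma card_edgesIn_univ [Fintype α] : #(edgesIn H univ) = edgeCount H := by
  rw [edgeCount, ← Nat.card_eq_finsetCard]
  exact Nat.card_congr (Equiv.subtypeEquivRight fun e ↦ by simp [mem_edgesIn])

lemma edgesIn_map (f : γ ↪ α) {S : Finset γ}
    (hf : ∀ u ∈ S, ∀ v ∈ S, H.Adj (f u) (f v) ↔ J.Adj u v) :
    edgesIn H (S.map f) = (edgesIn J S).map f.sym2Map := by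
  ext p
  induction p with | _ x y
  constructor
  · intro hp
    obtain ⟨⟨hx, hy⟩, hxy⟩ := mk_mem_edgesIn.1 hp
    obtain ⟨u, hu, rfl⟩ := mem_map.1 hx
    obtain ⟨v, hv, rfl⟩ := mem_map.1 hy
    exact mem_map.2 ⟨s(u, v), mk_mem_edgesIn.2 ⟨⟨hu, hv⟩, (hf u hu v hv).1 hxy⟩, rfl⟩
  · intro hp
    obtain ⟨q, hq, hqp⟩ := mem_map.1 hp
    induction q with | _ u v
    obtain ⟨⟨hu, hv⟩, huv⟩ := mk_mem_edgesIn.1 hq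
    rw [← hqp]
    exact mk_mem_edgesIn.2
      ⟨⟨mem_map_of_mem f hu, mem_map_of_mem f hv⟩, (hf u hu v hv).2 huv⟩

lemma comp_mem_edgeMaps {F : Finset (Sym2 γ)} (e : γ ↪ α) {φ : α → β} :
    φ ∘ e ∈ edgeMaps F G ↔ φ ∈ edgeMaps (F.map e.sym2Map) G := by
  simp [edgeMaps, Sym2.map_map]

lemma edgeMaps_anti {F F' : Finset (Sym2 α)} (h : F ⊆ F') : edgeMaps F' G ⊆ edgeMaps F G :=
  fun _ hφ e he ↦ hφ e (h he)

lemma mem_edgeMaps_congr {F : Finset (Sym2 α)} (hF : F ⊆ S.sym2) {φ ψ : α → β}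
    (h : ∀ i ∈ S, φ i = ψ i) : φ ∈ edgeMaps F G ↔ ψ ∈ edgeMaps F G :=
  forall₂_congr fun _ he ↦ by
    rw [Sym2.map_congr fun v hv ↦ h v (mem_sym2_iff.1 (hF he) v hv)]

lemma homDensity_eq_setDensity [Fintype α] [Fintype β] [DecidableEq α] :
    homDensity H G = setDensity (edgeMaps (edgesIn H univ) G) := by
  have hhom : Nat.card (H →g G) = Nat.card (edgeMaps (edgesIn H univ) G) := by
    refine Nat.card_congr ⟨fun φ ↦ ⟨φ, fun e he ↦ ?_⟩, fun φ ↦ ⟨φ, fun h ↦ ?_⟩,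
      fun _ ↦ rfl, fun _ ↦ rfl⟩
    · exact φ.map_mem_edgeSet (mem_edgesIn.1 he).2
    · exact φ.2 _ (mk_mem_edgesIn.2 ⟨⟨mem_univ _, mem_univ _⟩, h⟩)
  rw [homDensity, setDensity_eq_card_div, hhom, Fintype.card_fun, Nat.cast_pow]

lemma indicator_edgeMaps (F : Finset (Sym2 α)) (G : SimpleGraph β) (φ : α → β) :
    (edgeMaps F G).indicator (1 : (α → β) → ℝ) φ =
      ∏ e ∈ F, G.edgeSet.indicator 1 (e.map φ) := by
  by_cases h : φ ∈ edgeMaps F G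
  · rw [Set.indicator_of_mem h, prod_eq_one fun e he ↦ Set.indicator_of_mem (h e he) 1]
    rfl
  · obtain ⟨e, he, hG⟩ : ∃ e ∈ F, e.map φ ∉ G.edgeSet := by simpa [edgeMaps] using h
    rw [prod_eq_zero he (Set.indicator_of_notMem hG 1)]
    exact Set.indicator_of_notMem (fun (h : φ ∈ edgeMaps F G) ↦ hG (h e he)) 1

variable [Fintype α] [DecidableEq α] [Fintype γ] [DecidableEq γ] [Fintype β]

lemma setDensity_edgeMaps_map [Nonempty β] (F : Finset (Sym2 γ)) (e : γ ↪ α) :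
    setDensity (edgeMaps (F.map e.sym2Map) G) = setDensity (edgeMaps F G) := by
  rw [setDensity, setDensity, ← expect_comp_embedding e]
  exact expect_congr rfl fun φ _ ↦ by
    by_cases h : φ ∘ e ∈ edgeMaps F G
    · simp [h, (comp_mem_edgeMaps e).1 h]
    · simp [h, mt (comp_mem_edgeMaps e).2 h]

lemma uniformDensity_edgeMaps_comp [Nonempty β] (F : Finset (Sym2 α)) (σ : Equiv.Perm α)
    (φ : α → β) :
    uniformDensity (edgeMaps F G) (φ ∘ σ) =
      uniformDensity (edgeMaps (F.map σ.toEmbedding.sym2Map) G) φ := by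
  have hmem : φ ∘ σ ∈ edgeMaps F G ↔ φ ∈ edgeMaps (F.map σ.toEmbedding.sym2Map) G :=
    comp_mem_edgeMaps σ.toEmbedding
  by_cases h : φ ∘ σ ∈ edgeMaps F G
  · simp [uniformDensity, h, hmem.1 h, setDensity_edgeMaps_map]
  · simp [uniformDensity, h, mt hmem.2 h]

lemma dependsOn_uniformDensity_edgeMaps {F : Finset (Sym2 α)} (hF : F ⊆ S.sym2) :
    DependsOn (uniformDensity (edgeMaps F G)) S := fun φ ψ h ↦ by
  have hmem := mem_edgeMaps_congr (G := G) hF h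
  by_cases hφ : φ ∈ edgeMaps F G
  · simp [uniformDensity, hφ, hmem.1 hφ]
  · simp [uniformDensity, hφ, mt hmem.2 hφ]

lemma setDensity_edgeMaps_empty [Nonempty β] (G : SimpleGraph β) :
    setDensity (edgeMaps (∅ : Finset (Sym2 α)) G) = 1 := by
  simp only [setDensity, indicator_edgeMaps, prod_empty, Fintype.expect_const]

lemma entropy_condAvg_uniformDensity_le [Nonempty β] {F F' : Finset (Sym2 α)} (hF' : F' ⊆ F)
    (hS : F' ⊆ S.sym2) (hF : 0 < setDensity (edgeMaps F G)) :
    entropy (condAvg S (uniformDensity (edgeMaps F G))) ≤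
      Real.log (setDensity (edgeMaps F' G)) := by
  rw [Real.le_log_iff_exp_le (hF.trans_le (setDensity_mono (edgeMaps_anti hF')))]
  refine exp_entropy_le_setDensity (condAvg_nonneg (uniformDensity_nonneg _))
    ((expect_condAvg S _).trans (expect_uniformDensity hF)) fun φ hφ ↦ ?_
  obtain ⟨ψ, -, hψ⟩ := exists_ne_zero_of_expect_ne_zero hφ
  have hmem : S.piecewise φ ψ ∈ edgeMaps F' G :=
    edgeMaps_anti hF' (Set.mem_of_indicator_ne_zero hψ)
  exact (mem_edgeMaps_congr hS fun i hi ↦ piecewise_eq_of_mem S φ ψ hi).1 hmem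

end EdgeMaps

section TreeDecomposition

variable {ι : Type*} {T : SimpleGraph ι}

lemma connected_finset_induction [Fintype ι] [DecidableEq ι] (hT : T.Connected)
    {P : Finset ι → Prop} (h_singleton : ∀ X, P {X})
    (h_insert : ∀ ⦃s : Finset ι⦄ ⦃X Y : ι⦄, (T.induce (s : Set ι)).Connected → X ∈ s → Y ∉ s →
      T.Adj X Y → P s → P (insert Y s)) : P univ := by
  obtain ⟨X₀⟩ := hT.nonempty
  have hX₀ : (T.induce (({X₀} : Finset ι) : Set ι)).Connected := by
    rw [coe_singleton]
    exact ⟨.of_subsingleton⟩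
  obtain ⟨s, ⟨hs, hPs⟩, hmax⟩ :=
    (Set.toFinite {s : Finset ι | (T.induce (s : Set ι)).Connected ∧ P s}).exists_maximal
      ⟨{X₀}, hX₀, h_singleton X₀⟩
  by_contra hP
  obtain ⟨Z, hZ⟩ : ∃ Z, Z ∉ s := by
    by_contra! h
    exact hP (eq_univ_of_forall h ▸ hPs)
  obtain ⟨⟨X, hX⟩⟩ := hs.nonempty
  obtain ⟨d, -, hd, hd'⟩ :=
    (hT.preconnected X Z).some.exists_boundary_dart s hX hZ
  have hconn : (T.induce ((insert d.snd s : Finset ι) : Set ι)).Connected := by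
    have hunion : ((insert d.snd s : Finset ι) : Set ι) = ↑s ∪ {d.fst, d.snd} := by
      ext Y
      grind
    rw [hunion]
    exact SimpleGraph.induce_union_connected hs.preconnected
      (SimpleGraph.induce_pair_connected_of_adj d.adj).preconnected
      ⟨d.fst, hd, Set.mem_insert _ _⟩
  exact hd' (hmax ⟨hconn, h_insert hs hd hd' d.adj hPs⟩ (subset_insert _ _) (mem_insert_self _ _))

variable {α : Type*} [DecidableEq α] {H : SimpleGraph α} {bag : ι → Finset α}

lemma IsTreeDecomp.biUnion_inter_bag (h : IsTreeDecomp H bag T) {s : Finset ι} {X Y : ι}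
    (hs : (T.induce (s : Set ι)).Connected) (hX : X ∈ s) (hY : Y ∉ s) (hXY : T.Adj X Y) :
    s.biUnion bag ∩ bag Y = bag X ∩ bag Y := by
  classical
  obtain ⟨-, -, -, hpath⟩ := h
  refine Subset.antisymm (fun v hv ↦ ?_)
    (inter_subset_inter_right (subset_biUnion_of_mem bag hX))
  obtain ⟨hvs, hvY⟩ := mem_inter.1 hv
  obtain ⟨Z, hZ, hvZ⟩ := mem_biUnion.1 hvs
  obtain ⟨p, hp⟩ := (hs.preconnected ⟨Z, hZ⟩ ⟨X, hX⟩).exists_isPath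
  let q : T.Walk Z X := p.map (SimpleGraph.Embedding.induce (s : Set ι)).toHom
  have hYq : Y ∉ q.support := by
    intro hmem
    obtain ⟨W, -, rfl⟩ := List.mem_map.1 (SimpleGraph.Walk.support_map _ p ▸ hmem)
    exact hY W.2
  have hq : q.IsPath := hp.map Subtype.val_injective
  refine mem_inter.2 ⟨hpath Z Y X (q.concat hXY) (hq.concat hYq hXY) ?_ ?_, hvY⟩
  · simp [SimpleGraph.Walk.support_concat]
  · exact mem_inter.2 ⟨hvZ, hvY⟩

lemma IsTreeDecomp.biUnion_edgesIn_inter (h : IsTreeDecomp H bag T) {s : Finset ι} {X Y : ι}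
    (hs : (T.induce (s : Set ι)).Connected) (hX : X ∈ s) (hY : Y ∉ s) (hXY : T.Adj X Y) :
    s.biUnion (fun Z ↦ edgesIn H (bag Z)) ∩ edgesIn H (bag Y) = edgesIn H (bag X ∩ bag Y) := by
  rw [edgesIn_inter]
  refine Subset.antisymm (fun e he ↦ ?_)
    (inter_subset_inter_right (subset_biUnion_of_mem (fun Z ↦ edgesIn H (bag Z)) hX))
  obtain ⟨hes, heY⟩ := mem_inter.1 he
  obtain ⟨Z, hZ, heZ⟩ := mem_biUnion.1 hes
  rw [← edgesIn_inter, ← h.biUnion_inter_bag hs hX hY hXY]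
  rw [edgesIn_inter]
  exact mem_inter.2 ⟨edgesIn_mono (subset_biUnion_of_mem bag hZ) heZ, heY⟩

lemma IsTreeDecomp.biUnion_edgesIn [Fintype α] [Fintype ι] (h : IsTreeDecomp H bag T) :
    univ.biUnion (fun X ↦ edgesIn H (bag X)) = edgesIn H univ := by
  refine Subset.antisymm (biUnion_subset.2 fun X _ ↦ edgesIn_mono (subset_univ _)) fun e he ↦ ?_
  induction e with | _ u v
  obtain ⟨X, hu, hv⟩ := h.2.2.1 u v (mk_mem_edgesIn.1 he).2
  exact mem_biUnion.2 ⟨X, mem_univ X, mk_mem_edgesIn.2 ⟨⟨hu, hv⟩, (mk_mem_edgesIn.1 he).2⟩⟩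

variable {γ : Type*} {J : SimpleGraph γ}

lemma IsJDecomp.exists_perm [Finite α] (h : IsJDecomp H J bag T) {X Y : ι} (hXY : T.Adj X Y) :
    ∃ σ : Equiv.Perm α, (∀ v ∈ bag X ∩ bag Y, σ v = v) ∧
      (edgesIn H (bag X)).map σ.toEmbedding.sym2Map = edgesIn H (bag Y) := by
  classical
  obtain ⟨e, he⟩ := h.2.2 X Y hXY
  let e' : {v // v ∈ bag X} ≃ {v // v ∈ bag Y} := e.toEquiv
  have hσ {v : α} (hv : v ∈ bag X) : e'.extendSubtype v = e ⟨v, hv⟩ :=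
    e'.extendSubtype_apply_of_mem v hv
  refine ⟨e'.extendSubtype, fun v hv ↦ ?_, ?_⟩
  · rw [hσ (mem_inter.1 hv).1, he]
    exact (mem_inter.1 hv).2
  · have hmap : (bag X).map e'.extendSubtype.toEmbedding = bag Y := by
      refine eq_of_subset_of_card_le (fun v hv ↦ ?_) ?_
      · obtain ⟨u, hu, rfl⟩ := mem_map.1 hv
        exact e'.extendSubtype_mem u hu
      · rw [card_map, ← Fintype.card_coe (bag X), ← Fintype.card_coe (bag Y),
          Fintype.card_congr e']
    refine (edgesIn_map _ ?_).symm.trans (congrArg _ hmap)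
    intro u hu v hv
    simp only [Equiv.coe_toEmbedding, hσ hu, hσ hv]
    exact e.map_adj_iff

end TreeDecomposition

section Coupling

variable {α β γ ι : Type*} [Fintype β] {H : SimpleGraph α} {J : SimpleGraph γ} {G : SimpleGraph β}
  {c d : ℝ}

/-- The bound `t_{H[Y]}(G) ≥ c * d ^ (e(H[Y]) - e(H[S])) * t_{H[S]}(G)` for every `S ⊆ Y`, written
without division by powers of `d`. -/
def ExtensionBound [Fintype α] [DecidableEq α] (H : SimpleGraph α) (Y : Finset α)
    (G : SimpleGraph β) (c d : ℝ) : Prop :=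
  ∀ S ⊆ Y, c * d ^ #(edgesIn H Y) * setDensity (edgeMaps (edgesIn H S) G) ≤
    d ^ #(edgesIn H S) * setDensity (edgeMaps (edgesIn H Y) G)

variable [Fintype α] [DecidableEq α]

lemma ExtensionBound.map [Fintype γ] [DecidableEq γ] [Nonempty β] {Y : Finset γ}
    (h : ExtensionBound J Y G c d) (f : J ↪g H) :
    ExtensionBound H (Y.map f.toEmbedding) G c d := by
  intro S hS
  obtain ⟨S, hSY, rfl⟩ := subset_map_iff.1 hS
  have hf (A : Finset γ) : edgesIn H (A.map f.toEmbedding) =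
      (edgesIn J A).map f.toEmbedding.sym2Map :=
    edgesIn_map f.toEmbedding fun _ _ _ _ ↦ f.map_adj_iff
  simpa only [hf, card_map, setDensity_edgeMaps_map] using h S hSY

lemma ExtensionBound.setDensity_pos [Nonempty β] {Y : Finset α} (h : ExtensionBound H Y G c d)
    (hc : 0 < c) (hd : 0 < d) : 0 < setDensity (edgeMaps (edgesIn H Y) G) := by
  have h₀ := h ∅ (empty_subset Y)
  rw [edgesIn_empty, setDensity_edgeMaps_empty, mul_one] at h₀
  exact pos_of_mul_pos_right ((mul_pos hc (pow_pos hd _)).trans_le h₀) (pow_pos hd _).le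

lemma ExtensionBound.log_le [Nonempty β] {S Y : Finset α} (h : ExtensionBound H Y G c d)
    (hc : 0 < c) (hd : 0 < d) (hSY : S ⊆ Y) :
    Real.log c + #(edgesIn H Y) * Real.log d + Real.log (setDensity (edgeMaps (edgesIn H S) G)) ≤
      #(edgesIn H S) * Real.log d + Real.log (setDensity (edgeMaps (edgesIn H Y) G)) := by
  have hY := h.setDensity_pos hc hd
  have hS := hY.trans_le (setDensity_mono (edgeMaps_anti (edgesIn_mono hSY)))
  have hdpow (n : ℕ) : d ^ n ≠ 0 := (pow_pos hd n).ne'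
  have hlog := Real.log_le_log (by positivity) (h S hSY)
  rwa [Real.log_mul (mul_ne_zero hc.ne' (hdpow _)) hS.ne', Real.log_mul hc.ne' (hdpow _),
    Real.log_mul (hdpow _) hY.ne', Real.log_pow, Real.log_pow] at hlog

/-- `f` is the density of a random map `α → β` whose restriction to each bag in `s` is a uniformly
random homomorphism to `G`. It does not involve the coordinates outside these bags, so the values
there are independent and uniform. -/
structure IsHomCoupling (H : SimpleGraph α) (G : SimpleGraph β) (bag : ι → Finset α)
    (s : Finset ι) (f : (α → β) → ℝ) : Prop where
  nonneg : ∀ φ, 0 ≤ f φ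
  dependsOn : DependsOn f (s.biUnion bag)
  condAvg_bag : ∀ X ∈ s, condAvg (bag X) f = uniformDensity (edgeMaps (edgesIn H (bag X)) G)

variable {bag : ι → Finset α} {s : Finset ι} {X Y : ι} {T : SimpleGraph ι} {f : (α → β) → ℝ}

lemma isHomCoupling_singleton [Nonempty β] (X : ι) :
    IsHomCoupling H G bag {X} (uniformDensity (edgeMaps (edgesIn H (bag X)) G)) where
  nonneg := uniformDensity_nonneg _
  dependsOn := by
    rw [singleton_biUnion]
    exact dependsOn_uniformDensity_edgeMaps edgesIn_subset_sym2
  condAvg_bag Y hY := by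
    rw [mem_singleton.1 hY]
    exact condAvg_of_dependsOn (dependsOn_uniformDensity_edgeMaps edgesIn_subset_sym2)

lemma IsHomCoupling.expect_eq_one [Nonempty β] (hf : IsHomCoupling H G bag s f) (hX : X ∈ s)
    (hpos : 0 < setDensity (edgeMaps (edgesIn H (bag X)) G)) : 𝔼 φ, f φ = 1 := by
  rw [← expect_condAvg (bag X), hf.condAvg_bag X hX, expect_uniformDensity hpos]

lemma IsHomCoupling.mem_edgeMaps_of_ne_zero (hf : IsHomCoupling H G bag s f)
    {φ : α → β} (hφ : f φ ≠ 0) :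
    φ ∈ edgeMaps (s.biUnion fun X ↦ edgesIn H (bag X)) G := by
  intro e he
  obtain ⟨X, hX, heX⟩ := mem_biUnion.1 he
  have hmarg : uniformDensity (edgeMaps (edgesIn H (bag X)) G) φ ≠ 0 := by
    rw [← hf.condAvg_bag X hX]
    exact mt (eq_zero_of_condAvg_eq_zero hf.nonneg) hφ
  exact Set.mem_of_indicator_ne_zero hmarg e heX

lemma IsJDecomp.condAvg_uniformDensity_eq [Nonempty β] (h : IsJDecomp H J bag T)
    (hXY : T.Adj X Y) :
    condAvg (bag X ∩ bag Y) (uniformDensity (edgeMaps (edgesIn H (bag X)) G)) =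
      condAvg (bag X ∩ bag Y) (uniformDensity (edgeMaps (edgesIn H (bag Y)) G)) := by
  obtain ⟨σ, hσ, hedges⟩ := h.exists_perm hXY
  rw [← condAvg_comp_perm σ hσ]
  simp only [uniformDensity_edgeMaps_comp, hedges]

lemma IsHomCoupling.condAvg_inter_eq [Nonempty β] (hf : IsHomCoupling H G bag s f)
    (h : IsJDecomp H J bag T) (hX : X ∈ s) (hXY : T.Adj X Y) :
    condAvg (bag X ∩ bag Y) f =
      condAvg (bag X ∩ bag Y) (uniformDensity (edgeMaps (edgesIn H (bag Y)) G)) := by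
  rw [← h.condAvg_uniformDensity_eq hXY, ← hf.condAvg_bag X hX, condAvg_condAvg,
    inter_eq_left.2 inter_subset_left]

lemma IsHomCoupling.glue_uniformDensity [Nonempty β] [DecidableEq ι]
    (hf : IsHomCoupling H G bag s f)
    (h : condAvg (s.biUnion bag ∩ bag Y) f =
      condAvg (s.biUnion bag ∩ bag Y) (uniformDensity (edgeMaps (edgesIn H (bag Y)) G))) :
    IsHomCoupling H G bag (insert Y s)
      (glue (s.biUnion bag ∩ bag Y) f (uniformDensity (edgeMaps (edgesIn H (bag Y)) G))) := by
  set u := uniformDensity (edgeMaps (edgesIn H (bag Y)) G)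
  have hu : ∀ φ, 0 ≤ u φ := uniformDensity_nonneg _
  have huY : DependsOn u (bag Y) := dependsOn_uniformDensity_edgeMaps edgesIn_subset_sym2
  refine ⟨glue_nonneg hf.nonneg hu, ?_, fun X hX ↦ ?_⟩
  · rw [biUnion_insert, union_comm]
    exact dependsOn_glue hf.dependsOn huY inter_subset_left
  · rcases mem_insert.1 hX with rfl | hX
    · exact condAvg_glue_right hu hf.dependsOn huY h
    · rw [← inter_eq_left.2 (subset_biUnion_of_mem bag hX), ← condAvg_condAvg,
        condAvg_glue_left hf.nonneg hf.dependsOn huY h, inter_eq_left.2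
        (subset_biUnion_of_mem bag hX), hf.condAvg_bag X hX]

theorem IsJDecomp.exists_isHomCoupling [Nonempty β] [Fintype ι] (h : IsJDecomp H J bag T)
    (hc : 0 < c) (hd : 0 < d) (hbag : ∀ X, ExtensionBound H (bag X) G c d) :
    ∃ f, IsHomCoupling H G bag univ f ∧
      Fintype.card ι * Real.log c + edgeCount H * Real.log d ≤ entropy f := by
  classical
  let E (X : ι) := edgesIn H (bag X)
  let t (S : Finset α) := setDensity (edgeMaps (edgesIn H S) G)
  have hpos (X : ι) : 0 < t (bag X) := (hbag X).setDensity_pos hc hd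
  rw [← card_univ, ← card_edgesIn_univ, ← h.1.biUnion_edgesIn]
  refine connected_finset_induction h.1.1.connected (P := fun s ↦ ∃ f, IsHomCoupling H G bag s f ∧
    #s * Real.log c + #(s.biUnion E) * Real.log d ≤ entropy f) (fun X ↦ ?_) ?_
  · refine ⟨_, isHomCoupling_singleton X, ?_⟩
    have hlog := (hbag X).log_le hc hd (empty_subset _)
    rw [edgesIn_empty, setDensity_edgeMaps_empty] at hlog
    rw [entropy_uniformDensity (hpos X), card_singleton, singleton_biUnion]
    simpa using hlog
  · rintro s X Y hs hX hY hXY ⟨f, hf, hfent⟩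
    have hinter := h.1.biUnion_inter_bag hs hX hY hXY
    have hmarg := hf.condAvg_inter_eq h hX hXY
    rw [← hinter] at hmarg
    refine ⟨_, hf.glue_uniformDensity hmarg, ?_⟩
    have hlog := (hbag Y).log_le hc hd (inter_subset_right (s₁ := bag X))
    have hmargent : entropy (condAvg (bag X ∩ bag Y) (uniformDensity (edgeMaps (E Y) G))) ≤
        Real.log (t (bag X ∩ bag Y)) :=
      entropy_condAvg_uniformDensity_le (edgesIn_mono inter_subset_right) edgesIn_subset_sym2
        (hpos Y)
    have hcard : (#(s.biUnion E ∪ E Y) : ℝ) + #(edgesIn H (bag X ∩ bag Y)) =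
        #(s.biUnion E) + #(E Y) := by
      rw [← h.1.biUnion_edgesIn_inter hs hX hY hXY]
      exact_mod_cast card_union_add_card_inter _ _
    rw [entropy_glue hf.nonneg (uniformDensity_nonneg _) hf.dependsOn
      (dependsOn_uniformDensity_edgeMaps edgesIn_subset_sym2) hmarg, hinter,
      entropy_uniformDensity (hpos Y), card_insert_of_notMem hY, biUnion_insert, union_comm,
      eq_sub_of_add_eq hcard]
    push_cast
    linarith

theorem IsJDecomp.pow_mul_pow_le_homDensity [Nonempty β] [Fintype γ] [DecidableEq γ] [Fintype ι]
    (h : IsJDecomp H J bag T) (hc : 0 < c) (hd : 0 < d) (hJ : ExtensionBound J univ G c d) :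
    c ^ Fintype.card ι * d ^ edgeCount H ≤ homDensity H G := by
  classical
  have hbag (X : ι) : ExtensionBound H (bag X) G c d := by
    obtain ⟨e⟩ := h.2.1 X
    let f : J ↪g H := (SimpleGraph.Embedding.induce _).comp e.symm.toEmbedding
    have hf : univ.map f.toEmbedding = bag X := by
      ext v
      simp only [mem_map, mem_univ, true_and]
      exact ⟨fun ⟨a, ha⟩ ↦ ha ▸ (e.symm a).2, fun hv ↦ ⟨e ⟨v, hv⟩, by simp [f]⟩⟩
    exact hf ▸ hJ.map f
  obtain ⟨f, hf, hent⟩ := h.exists_isHomCoupling hc hd hbag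
  obtain ⟨X⟩ := h.1.1.connected.nonempty
  have hf_sum := hf.expect_eq_one (mem_univ X) ((hbag X).setDensity_pos hc hd)
  calc c ^ Fintype.card ι * d ^ edgeCount H
      = Real.exp (Fintype.card ι * Real.log c + edgeCount H * Real.log d) := by
        rw [Real.exp_add, Real.exp_nat_mul, Real.exp_nat_mul, Real.exp_log hc, Real.exp_log hd]
    _ ≤ Real.exp (entropy f) := Real.exp_le_exp.2 hent
    _ ≤ homDensity H G := by
        rw [homDensity_eq_setDensity, ← h.1.biUnion_edgesIn]
        exact exp_entropy_le_setDensity hf.nonneg hf_sum fun φ ↦ hf.mem_edgeMaps_of_ne_zero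

end Coupling

section LogConvex

variable {u : ℕ → ℝ} {θ : ℝ} {m k : ℕ}

lemma pow_succ_le_pow_of_sq_le_mul (h0 : u 0 = 1) (hu : ∀ m, 0 ≤ u m)
    (hlc : ∀ m, u (m + 1) ^ 2 ≤ u m * u (m + 2)) (m : ℕ) : u m ^ (m + 1) ≤ u (m + 1) ^ m := by
  induction m with
  | zero => simp [h0]
  | succ m ih =>
    rcases (hu (m + 1)).eq_or_lt' with hm | hm
    · rw [hm, zero_pow (by lia)]
      exact pow_nonneg (hu _) _
    · refine le_of_mul_le_mul_left ?_ (pow_pos hm m)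
      calc u (m + 1) ^ m * u (m + 1) ^ (m + 1 + 1)
          = (u (m + 1) ^ 2) ^ (m + 1) := by ring
        _ ≤ (u m * u (m + 2)) ^ (m + 1) := by gcongr; exact hlc m
        _ = u m ^ (m + 1) * u (m + 2) ^ (m + 1) := mul_pow _ _ _
        _ ≤ u (m + 1) ^ m * u (m + 2) ^ (m + 1) := by gcongr; exact pow_nonneg (hu _) _

lemma le_pow_of_sq_le_mul (h0 : u 0 = 1) (hu : ∀ m, 0 ≤ u m)
    (hlc : ∀ m, u (m + 1) ^ 2 ≤ u m * u (m + 2)) (hθ : 0 ≤ θ) (hk : u k ≤ θ ^ k) (hmk : m ≤ k) :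
    u m ≤ θ ^ m := by
  induction hmk using Nat.decreasingInduction with
  | self => exact hk
  | of_succ m _ ih =>
    refine le_of_pow_le_pow_left₀ m.succ_ne_zero (by positivity) ?_
    calc u m ^ (m + 1) ≤ u (m + 1) ^ m := pow_succ_le_pow_of_sq_le_mul h0 hu hlc m
      _ ≤ (θ ^ (m + 1)) ^ m := by gcongr; exact hu _
      _ = (θ ^ m) ^ (m + 1) := by ring

end LogConvex

section Kernel

variable {β : Type*} [Fintype β] {K : β → β → ℝ}

/-- The integral operator with kernel `K` for the uniform probability measure on `β`. -/
noncomputable def kernelOp (K : β → β → ℝ) : Module.End ℝ (β → ℝ) where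
  toFun f y := 𝔼 x, f x * K x y
  map_add' f g := by
    ext y
    simp only [Pi.add_apply, add_mul, expect_add_distrib]
  map_smul' c f := by
    ext y
    simp only [Pi.smul_apply, smul_eq_mul, mul_assoc, mul_expect, RingHom.id_apply]

/-- The homomorphism density of the path with `m` edges in the weighted graph `K`, computed as
`⟨A ^ m 1, 1⟩` for the integral operator `A` of `K`. -/
noncomputable def walkDensity (K : β → β → ℝ) (m : ℕ) : ℝ := 𝔼 y, (kernelOp K ^ m) 1 y

lemma kernelOp_apply (f : β → ℝ) (y : β) : kernelOp K f y = 𝔼 x, f x * K x y := rfl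

lemma kernelOp_pow_succ_apply (m : ℕ) (f : β → ℝ) :
    (kernelOp K ^ (m + 1)) f = kernelOp K ((kernelOp K ^ m) f) := by
  rw [pow_succ', Module.End.mul_apply]

lemma expect_kernelOp_pow_mul (hK : ∀ x y, K x y = K y x) (m : ℕ) (f g : β → ℝ) :
    𝔼 y, (kernelOp K ^ m) f y * g y = 𝔼 y, f y * (kernelOp K ^ m) g y := by
  induction m generalizing g with
  | zero => rfl
  | succ m ih =>
    rw [kernelOp_pow_succ_apply, pow_succ, Module.End.mul_apply, ← ih]
    simp only [kernelOp_apply, expect_mul, mul_expect]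
    rw [expect_comm]
    exact expect_congr rfl fun x _ ↦ expect_congr rfl fun y _ ↦ by rw [hK x y]; ring

lemma expect_mem_Icc [Nonempty β] {f : β → ℝ} (hf : ∀ x, f x ∈ Set.Icc (0 : ℝ) 1) :
    𝔼 x, f x ∈ Set.Icc (0 : ℝ) 1 :=
  ⟨expect_nonneg fun x _ ↦ (hf x).1, expect_le univ_nonempty fun x _ ↦ (hf x).2⟩

lemma kernelOp_pow_mem_Icc [Nonempty β] (hK : ∀ x y, K x y ∈ Set.Icc (0 : ℝ) 1) {f : β → ℝ}
    (hf : ∀ x, f x ∈ Set.Icc (0 : ℝ) 1) (m : ℕ) (y : β) :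
    (kernelOp K ^ m) f y ∈ Set.Icc (0 : ℝ) 1 := by
  induction m generalizing y with
  | zero => exact hf y
  | succ m ih =>
    rw [kernelOp_pow_succ_apply]
    exact expect_mem_Icc fun x ↦ unitInterval.mul_mem (ih x) (hK x y)

lemma walkDensity_nonneg [Nonempty β] (hK : ∀ x y, K x y ∈ Set.Icc (0 : ℝ) 1) (m : ℕ) :
    0 ≤ walkDensity K m :=
  (expect_mem_Icc (kernelOp_pow_mem_Icc hK (fun _ ↦ ⟨zero_le_one, le_rfl⟩) m)).1

lemma walkDensity_zero [Nonempty β] : walkDensity K 0 = 1 :=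
  Fintype.expect_const (1 : ℝ)

lemma walkDensity_add (hK : ∀ x y, K x y = K y x) (i j : ℕ) :
    walkDensity K (i + j) = 𝔼 y, (kernelOp K ^ i) 1 y * (kernelOp K ^ j) 1 y := by
  rw [expect_kernelOp_pow_mul hK, ← Module.End.mul_apply, ← pow_add]
  simp only [Pi.one_apply, one_mul, walkDensity]

lemma walkDensity_add_sq_le (hK : ∀ x y, K x y = K y x) (i j : ℕ) :
    walkDensity K (i + j) ^ 2 ≤ walkDensity K (2 * i) * walkDensity K (2 * j) := by
  simp only [two_mul, walkDensity_add hK, ← sq]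
  exact expect_mul_sq_le_sq_mul_sq _ _ _

lemma walkDensity_le_pow [Nonempty β] (hsymm : ∀ x y, K x y = K y x)
    (hK : ∀ x y, K x y ∈ Set.Icc (0 : ℝ) 1) {θ : ℝ} (hθ : 0 ≤ θ) {k m : ℕ}
    (hk : walkDensity K (2 * k) ≤ θ ^ (2 * k)) (hm : m ≤ 2 * k) : walkDensity K m ≤ θ ^ m := by
  have heven {i : ℕ} (hi : i ≤ k) : walkDensity K (2 * i) ≤ θ ^ (2 * i) := by
    rw [pow_mul] at hk ⊢
    refine le_pow_of_sq_le_mul (u := fun i ↦ walkDensity K (2 * i)) walkDensity_zero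
      (fun i ↦ walkDensity_nonneg hK _) (fun i ↦ ?_) (sq_nonneg θ) hk hi
    have h := walkDensity_add_sq_le hsymm i (i + 2)
    rwa [show i + (i + 2) = 2 * (i + 1) by ring] at h
  obtain ⟨i, rfl | rfl⟩ := m.even_or_odd'
  · exact heven (by lia)
  · refine le_of_pow_le_pow_left₀ two_ne_zero (by positivity) ?_
    calc walkDensity K (2 * i + 1) ^ 2 = walkDensity K (i + (i + 1)) ^ 2 := by
          rw [two_mul, add_assoc]
      _ ≤ walkDensity K (2 * i) * walkDensity K (2 * (i + 1)) := walkDensity_add_sq_le hsymm _ _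
      _ ≤ θ ^ (2 * i) * θ ^ (2 * (i + 1)) :=
          mul_le_mul (heven (by lia)) (heven (by lia)) (walkDensity_nonneg hK _) (by positivity)
      _ = (θ ^ (2 * i + 1)) ^ 2 := by ring

lemma expect_fin_cons {m : ℕ} (F : (Fin (m + 1) → β) → ℝ) :
    𝔼 ψ, F ψ = 𝔼 φ : Fin m → β, 𝔼 x, F (Fin.cons x φ) := by
  rw [← Fintype.expect_equiv (Fin.consEquiv fun _ ↦ β) _ F fun _ ↦ rfl, ← univ_product_univ,
    expect_product, expect_comm]
  rfl

lemma expect_fin_cons_mul_kernel {m : ℕ} (u : β → ℝ) (F : (Fin (m + 1) → β) → ℝ) :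
    𝔼 ψ : Fin (m + 2) → β, u (ψ 0) * K (ψ 0) (ψ 1) * F (Fin.tail ψ) =
      𝔼 ψ, kernelOp K u (ψ 0) * F ψ := by
  rw [expect_fin_cons]
  exact expect_congr rfl fun ψ _ ↦ by
    simp only [Fin.cons_zero, Fin.cons_one, Fin.tail_cons, kernelOp_apply, expect_mul]

lemma expect_mul_prod_kernel_mul {m : ℕ} (u v : β → ℝ) :
    𝔼 ψ : Fin (m + 1) → β,
        u (ψ 0) * ((∏ i : Fin m, K (ψ i.castSucc) (ψ i.succ)) * v (ψ (Fin.last m))) =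
      𝔼 y, (kernelOp K ^ m) u y * v y := by
  induction m generalizing u with
  | zero =>
    rw [expect_fin_cons, univ_unique, expect_singleton]
    simp [Fin.last]
  | succ m ih =>
    rw [pow_succ, Module.End.mul_apply, ← ih, ← expect_fin_cons_mul_kernel]
    exact expect_congr rfl fun ψ _ ↦ by
      rw [Fin.prod_univ_succ, mul_assoc, mul_assoc]
      rfl

lemma prod_eq_ite_mul_prod_succ {m : ℕ} (s : Finset (Fin (m + 1))) (g : Fin (m + 1) → ℝ) :
    ∏ i ∈ s, g i = (if 0 ∈ s then g 0 else 1) *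
      ∏ i : Fin m with i.succ ∈ s, g i.succ := by
  rw [prod_filter, ← Fin.prod_univ_succ (fun i ↦ if i ∈ s then g i else 1), prod_ite_mem,
    univ_inter]

lemma expect_kernelOp_pow_mul_prod_le [Nonempty β] (hK : ∀ x y, K x y ∈ Set.Icc (0 : ℝ) 1)
    {θ : ℝ} {n : ℕ} (hw : ∀ j ≤ n, walkDensity K j ≤ θ ^ j) {m r : ℕ} (hn : r + m ≤ n)
    (s : Finset (Fin m)) :
    𝔼 ψ : Fin (m + 1) → β,
        (kernelOp K ^ r) 1 (ψ 0) * ∏ i ∈ s, K (ψ i.castSucc) (ψ i.succ) ≤ θ ^ r * θ ^ #s := by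
  induction m generalizing r with
  | zero =>
    rw [expect_fin_cons, univ_unique, expect_singleton]
    simpa [s.eq_empty_of_isEmpty, walkDensity] using hw r hn
  | succ m ih =>
    let s' : Finset (Fin m) := {i | i.succ ∈ s}
    let P (ψ : Fin (m + 1) → β) : ℝ := ∏ i ∈ s', K (ψ i.castSucc) (ψ i.succ)
    have hP (ψ : Fin (m + 1) → β) : 0 ≤ P ψ := prod_nonneg fun i _ ↦ (hK _ _).1
    have hcard : θ ^ #s = (if 0 ∈ s then θ else 1) * θ ^ #s' := by
      simpa only [prod_const] using prod_eq_ite_mul_prod_succ s fun _ ↦ θ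
    have hprod (ψ : Fin (m + 2) → β) : ∏ i ∈ s, K (ψ i.castSucc) (ψ i.succ) =
        (if 0 ∈ s then K (ψ 0) (ψ 1) else 1) * P (Fin.tail ψ) :=
      prod_eq_ite_mul_prod_succ s fun i ↦ K (ψ i.castSucc) (ψ i.succ)
    simp only [hcard, hprod]
    split_ifs with h0
    · simp only [← mul_assoc]
      rw [expect_fin_cons_mul_kernel, ← kernelOp_pow_succ_apply, ← pow_succ]
      exact ih (by lia) s'
    · have hrest : 𝔼 ψ, P ψ ≤ θ ^ #s' := by simpa using ih (r := 0) (by lia) s'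
      simp only [one_mul]
      calc 𝔼 ψ : Fin (m + 2) → β, (kernelOp K ^ r) 1 (ψ 0) * P (Fin.tail ψ)
          = walkDensity K r * 𝔼 ψ, P ψ := by
            rw [expect_fin_cons, expect_comm, walkDensity, expect_mul_expect]
            rfl
        _ ≤ θ ^ r * θ ^ #s' := mul_le_mul (hw r (by lia)) hrest
            (expect_nonneg fun ψ _ ↦ hP ψ) ((walkDensity_nonneg hK r).trans (hw r (by lia)))

end Kernel

section LocalDensity

variable {β : Type*}

lemma le_of_forall_convexOn_update [Finite β] [DecidableEq β] {Φ : (β → ℝ) → ℝ} {B : ℝ}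
    (hΦ : ∀ f a, ConvexOn ℝ Set.univ fun t ↦ Φ (Function.update f a t))
    (hB : ∀ X : Finset β, Φ ((X : Set β).indicator 1) ≤ B) {f : β → ℝ}
    (hf : ∀ x, f x ∈ Set.Icc (0 : ℝ) 1) : Φ f ≤ B := by
  cases nonempty_fintype β
  suffices h : ∀ s : Finset β, ∀ f : β → ℝ, (∀ x, f x ∈ Set.Icc (0 : ℝ) 1) →
      (∀ x ∉ s, f x = 0 ∨ f x = 1) → Φ f ≤ B from h univ f hf (by simp)
  intro s
  induction s using Finset.induction_on with
  | empty =>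
    intro f _ hf01
    convert hB {x | f x = 1}
    ext x
    rcases hf01 x (notMem_empty x) with h | h <;> simp [h]
  | insert a s _ ih =>
    intro f hf hf01
    have hvertex {t : ℝ} (ht : t = 0 ∨ t = 1) : Φ (Function.update f a t) ≤ B := by
      refine ih _ (fun x ↦ ?_) fun x hx ↦ ?_ <;> rcases eq_or_ne x a with rfl | hxa
      · rcases ht with rfl | rfl <;> simp
      · simpa [hxa] using hf x
      · simpa using ht
      · simpa [hxa] using hf01 x (by simp [hxa, hx])
    have hmax := (hΦ f a).le_max_of_mem_Icc (Set.mem_univ 0) (Set.mem_univ 1) (hf a)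
    rw [Function.update_eq_self] at hmax
    exact hmax.trans (max_le (hvertex (.inl rfl)) (hvertex (.inr rfl)))

/-- The adjacency matrix of `G` with real entries, as an indicator function of the edge set so that
no decidability assumption is needed. -/
noncomputable def edgeKernel (G : SimpleGraph β) (x y : β) : ℝ := G.edgeSet.indicator 1 s(x, y)

variable {G : SimpleGraph β}

lemma edgeKernel_comm (x y : β) : edgeKernel G x y = edgeKernel G y x := by
  rw [edgeKernel, Sym2.eq_swap, edgeKernel]

lemma edgeKernel_mem_Icc (x y : β) : edgeKernel G x y ∈ Set.Icc (0 : ℝ) 1 :=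
  ⟨Set.indicator_nonneg (fun _ _ ↦ zero_le_one) _,
    Set.indicator_le_self' (fun _ _ ↦ zero_le_one) _⟩

lemma edgeKernel_self (x : β) : edgeKernel G x x = 0 :=
  Set.indicator_of_notMem (by simp) _

lemma sum_sum_edgeKernel_univ [Fintype β] : ∑ x, ∑ y, edgeKernel G x y = 2 * edgeCount G := by
  classical
  have hdegree (x : β) : ∑ y, edgeKernel G x y = G.degree x := by
    rw [← G.card_neighborFinset_eq_degree, G.neighborFinset_eq_filter, ← sum_boole]
    rfl
  simp only [hdegree]
  rw [edgeCount, Nat.card_eq_fintype_card, ← G.edgeFinset_card]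
  exact_mod_cast G.sum_degrees_eq_twice_card_edges

lemma sum_sum_edgeKernel (X : Finset β) :
    ∑ x ∈ X, ∑ y ∈ X, edgeKernel G x y = 2 * #(edgesIn G X) := by
  classical
  have hedges := edgesIn_map (H := G) (J := G.comap ((↑) : X → β))
    (Function.Embedding.subtype (· ∈ X)) (S := univ) fun _ _ _ _ ↦ Iff.rfl
  rw [univ_eq_attach, attach_map_val] at hedges
  have hcard : #(edgesIn G X) = edgeCount (G.comap ((↑) : X → β)) := by
    rw [hedges, card_map, ← card_edgesIn_univ, univ_eq_attach]
  rw [hcard, ← sum_sum_edgeKernel_univ, ← sum_coe_sort X]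
  exact sum_congr rfl fun x _ ↦ (sum_coe_sort X _).symm

variable [Fintype β]

lemma expect_kernelOp_mul_le_of_indicator {M : β → β → ℝ} {B : ℝ} (hM : ∀ x, 0 ≤ M x x)
    (hB : ∀ X : Finset β, 𝔼 y, kernelOp M ((X : Set β).indicator 1) y * (X : Set β).indicator 1 y
      ≤ B) {f : β → ℝ} (hf : ∀ x, f x ∈ Set.Icc (0 : ℝ) 1) :
    𝔼 y, kernelOp M f y * f y ≤ B := by
  classical
  refine le_of_forall_convexOn_update (Φ := fun f ↦ 𝔼 y, kernelOp M f y * f y) (fun f a ↦ ?_) hB hf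
  let g := Function.update f a 0
  let e : β → ℝ := Pi.single a 1
  have hdiag : 0 ≤ 𝔼 y, kernelOp M e y * e y := by
    refine expect_nonneg fun y _ ↦ ?_
    rcases eq_or_ne y a with rfl | hy
    · refine mul_nonneg (expect_nonneg fun x _ ↦ ?_) (by simp [e])
      rcases eq_or_ne x y with rfl | hx
      · simpa [e] using hM x
      · simp [e, hx]
    · simp [e, hy]
  have hquad (t : ℝ) : 𝔼 y, kernelOp M (Function.update f a t) y * Function.update f a t y =
      (𝔼 y, kernelOp M e y * e y) * t ^ 2 +
        (𝔼 y, (kernelOp M g y * e y + kernelOp M e y * g y)) * t +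
        𝔼 y, kernelOp M g y * g y := by
    have hupdate : Function.update f a t = g + t • e := by
      ext x
      rcases eq_or_ne x a with rfl | hx <;> simp [g, e, *]
    rw [hupdate, map_add, map_smul, expect_mul, expect_mul, ← expect_add_distrib,
      ← expect_add_distrib]
    exact expect_congr rfl fun y _ ↦ by
      simp only [Pi.add_apply, Pi.smul_apply, smul_eq_mul]
      ring
  simp only [hquad]
  exact (((even_two.convexOn_pow).smul hdiag).add
    ((LinearMap.mulLeft ℝ _).convexOn convex_univ)).add (convexOn_const _ convex_univ)

lemma expect_kernelOp_indicator (K : β → β → ℝ) (X : Finset β) :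
    𝔼 y, kernelOp K ((X : Set β).indicator 1) y * (X : Set β).indicator 1 y =
      (∑ x ∈ X, ∑ y ∈ X, K x y) / (Fintype.card β : ℝ) ^ 2 := by
  classical
  simp only [kernelOp_apply, Fintype.expect_eq_sum_div_card, Set.indicator_apply, mem_coe,
    Pi.one_apply, ite_mul, one_mul, zero_mul, mul_ite, mul_one, mul_zero, sum_ite_mem, univ_inter]
  rw [← sum_div, sum_comm, div_div, sq]

variable {ρ d : ℝ}

lemma LocallyDense.mul_sq_card_le (hG : LocallyDense G ρ d) {X : Finset β}
    (hX : ρ * Fintype.card β ≤ #X) : d * (#X : ℝ) ^ 2 ≤ ∑ x ∈ X, ∑ y ∈ X, edgeKernel G x y := by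
  have hcard : Nat.card {e : Sym2 β // e ∈ G.edgeSet ∧ ∀ v ∈ e, v ∈ X} = #(edgesIn G X) := by
    rw [← Nat.card_eq_finsetCard]
    exact Nat.card_congr (Equiv.subtypeEquivRight fun e ↦ by rw [mem_edgesIn, and_comm])
  have h := hG X hX
  rw [hcard] at h
  rw [sum_sum_edgeKernel]
  linarith

lemma LocallyDense.mul_expect_sq_sub_le [Nonempty β] (hG : LocallyDense G ρ d) (hd₀ : 0 ≤ d)
    (hd₁ : d ≤ 1) {f : β → ℝ} (hf : ∀ x, f x ∈ Set.Icc (0 : ℝ) 1) :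
    d * (𝔼 x, f x) ^ 2 - ρ ^ 2 ≤ 𝔼 y, kernelOp (edgeKernel G) f y * f y := by
  suffices h : 𝔼 y, kernelOp (fun x y ↦ d - edgeKernel G x y) f y * f y ≤ ρ ^ 2 by
    have hform : 𝔼 y, kernelOp (fun x y ↦ d - edgeKernel G x y) f y * f y =
        d * (𝔼 x, f x) ^ 2 - 𝔼 y, kernelOp (edgeKernel G) f y * f y := by
      simp only [kernelOp_apply, mul_sub, expect_sub_distrib, sub_mul, ← expect_mul]
      simp only [← mul_expect]
      ring
    linarith
  refine expect_kernelOp_mul_le_of_indicator (fun x ↦ by simpa [edgeKernel_self]) (fun X ↦ ?_) hf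
  have hsum : ∑ x ∈ X, ∑ y ∈ X, (d - edgeKernel G x y) =
      d * (#X : ℝ) ^ 2 - ∑ x ∈ X, ∑ y ∈ X, edgeKernel G x y := by
    simp only [sum_sub_distrib, sum_const, nsmul_eq_mul]
    ring
  rw [expect_kernelOp_indicator, div_le_iff₀ (by positivity), ← mul_pow, hsum]
  rcases le_or_gt (ρ * Fintype.card β) #X with hX | hX
  · exact (sub_nonpos.2 (hG.mul_sq_card_le hX)).trans (sq_nonneg _)
  · calc d * (#X : ℝ) ^ 2 - ∑ x ∈ X, ∑ y ∈ X, edgeKernel G x y ≤ d * (#X : ℝ) ^ 2 :=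
          sub_le_self _ (sum_nonneg fun x _ ↦ sum_nonneg fun y _ ↦ (edgeKernel_mem_Icc x y).1)
      _ ≤ (#X : ℝ) ^ 2 := mul_le_of_le_one_left (sq_nonneg _) hd₁
      _ ≤ (ρ * Fintype.card β) ^ 2 := by gcongr

lemma LocallyDense.le_walkDensity_one [Nonempty β] (hG : LocallyDense G ρ d) (hρ : ρ ≤ 1) :
    d ≤ walkDensity (edgeKernel G) 1 := by
  have h := hG.mul_sq_card_le (X := univ) (mul_le_of_le_one_left (Nat.cast_nonneg _) hρ)
  have hform := expect_kernelOp_indicator (edgeKernel G) univ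
  simp only [coe_univ, Set.indicator_univ, Pi.one_apply, mul_one] at hform
  rw [walkDensity, pow_one, hform, le_div_iff₀ (by positivity)]
  simpa using h

lemma LocallyDense.mul_walkDensity_sub_le [Nonempty β] (hG : LocallyDense G ρ d) (hd₀ : 0 ≤ d)
    (hd₁ : d ≤ 1) (m : ℕ) :
    d * walkDensity (edgeKernel G) (2 * (m + 1)) - ρ ^ 2 ≤
      𝔼 b, 𝔼 y, (kernelOp (edgeKernel G) ^ (2 * m + 1)) (edgeKernel G b) y * edgeKernel G b y := by
  set K := edgeKernel G
  set A := kernelOp K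
  have hK_symm (x y : β) : K x y = K y x := edgeKernel_comm x y
  have hstar (b : β) : 𝔼 y, (A ^ m) (K b) y = (A ^ (m + 1)) 1 b := by
    have h := expect_kernelOp_pow_mul hK_symm m (K b) 1
    simp only [Pi.one_apply, mul_one] at h
    rw [h, kernelOp_pow_succ_apply, kernelOp_apply]
    exact expect_congr rfl fun y _ ↦ by rw [hK_symm b y, mul_comm]
  have hsplit (b : β) : 𝔼 y, (A ^ (2 * m + 1)) (K b) y * K b y =
      𝔼 y, A ((A ^ m) (K b)) y * (A ^ m) (K b) y := by
    rw [two_mul, add_assoc, pow_add, Module.End.mul_apply, expect_kernelOp_pow_mul hK_symm,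
      kernelOp_pow_succ_apply]
  calc d * walkDensity K (2 * (m + 1)) - ρ ^ 2
      = 𝔼 b, (d * (𝔼 y, (A ^ m) (K b) y) ^ 2 - ρ ^ 2) := by
        simp only [hstar, expect_sub_distrib, Fintype.expect_const, ← mul_expect]
        rw [two_mul, walkDensity_add hK_symm]
        simp only [sq, A]
    _ ≤ 𝔼 b, 𝔼 y, (A ^ (2 * m + 1)) (K b) y * K b y := expect_le_expect fun b _ ↦ by
        rw [hsplit]
        exact hG.mul_expect_sq_sub_le hd₀ hd₁
          (kernelOp_pow_mem_Icc edgeKernel_mem_Icc (edgeKernel_mem_Icc b) m)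

end LocalDensity

section Cycle

variable {n : ℕ}

/-- The edge `{i, i + 1}` of the cycle. -/
def cycleEdge (n : ℕ) : Fin (n + 3) ↪ Sym2 (Fin (n + 3)) where
  toFun i := s(i, i + 1)
  inj' i j h := by
    have h2 : (1 : Fin (n + 3)) + 1 ≠ 0 := by
      simp [Fin.ext_iff, Fin.val_add, Nat.mod_eq_of_lt]
    rcases Sym2.eq_iff.1 h with ⟨hij, -⟩ | ⟨hij, hji⟩
    · exact hij
    · rw [hij, add_assoc, add_eq_left] at hji
      exact absurd hji h2

lemma cycleEdge_apply (i : Fin (n + 3)) : cycleEdge n i = s(i, i + 1) := rfl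

lemma edgesIn_cycleGraph (S : Finset (Fin (n + 3))) :
    edgesIn (SimpleGraph.cycleGraph (n + 3)) S =
      ({i | i ∈ S ∧ i + 1 ∈ S} : Finset (Fin (n + 3))).map (cycleEdge n) := by
  ext e
  induction e with | _ u v
  rw [mk_mem_edgesIn, SimpleGraph.cycleGraph_adj, sub_eq_iff_eq_add', sub_eq_iff_eq_add', mem_map]
  simp only [mem_filter_univ, cycleEdge_apply]
  constructor
  · rintro ⟨⟨hu, hv⟩, rfl | rfl⟩
    exacts [⟨v, ⟨hv, hu⟩, Sym2.eq_swap⟩, ⟨u, ⟨hu, hv⟩, rfl⟩]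
  · rintro ⟨i, ⟨hi, hi'⟩, h⟩
    rcases Sym2.eq_iff.1 h with ⟨rfl, rfl⟩ | ⟨rfl, rfl⟩
    exacts [⟨⟨hi, hi'⟩, .inr rfl⟩, ⟨⟨hi', hi⟩, .inl rfl⟩]

lemma edgesIn_cycleGraph_of_last_notMem {S : Finset (Fin (n + 3))} (hS : Fin.last (n + 2) ∉ S) :
    edgesIn (SimpleGraph.cycleGraph (n + 3)) S =
      ({i | i.castSucc ∈ S ∧ i.succ ∈ S} : Finset (Fin (n + 2))).map
        (Fin.castSuccEmb.trans (cycleEdge n)) := by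
  rw [edgesIn_cycleGraph, ← map_map]
  congr 1
  ext i
  induction i using Fin.lastCases <;> simp [hS, Fin.coeSucc_eq_succ]

variable {β : Type*} [Fintype β] {G : SimpleGraph β}

lemma setDensity_edgeMaps_cycleGraph :
    setDensity (edgeMaps (edgesIn (SimpleGraph.cycleGraph (n + 3)) univ) G) =
      𝔼 b, 𝔼 y, (kernelOp (edgeKernel G) ^ (n + 1)) (edgeKernel G b) y * edgeKernel G b y := by
  simp only [setDensity, indicator_edgeMaps, edgesIn_cycleGraph, mem_univ, and_self, filter_true,
    prod_map]
  rw [expect_fin_cons, expect_comm]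
  refine expect_congr rfl fun b _ ↦ ?_
  rw [← expect_mul_prod_kernel_mul]
  refine expect_congr rfl fun φ _ ↦ ?_
  rw [Fin.prod_univ_castSucc]
  simp only [cycleEdge_apply, Sym2.map_mk, Fin.coeSucc_eq_succ, Fin.last_add_one]
  rw [Fin.prod_univ_succ]
  simp only [← Fin.succ_castSucc, Fin.castSucc_zero, ← Fin.succ_last, Fin.cons_zero, Fin.cons_succ]
  rw [mul_assoc, edgeKernel_comm b (φ (Fin.last n).succ)]
  rfl

variable [Nonempty β]

lemma setDensity_edgeMaps_cycleGraph_le_of_last_notMem {θ : ℝ}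
    (hw : ∀ j ≤ n + 2, walkDensity (edgeKernel G) j ≤ θ ^ j) {S : Finset (Fin (n + 3))}
    (hS : Fin.last (n + 2) ∉ S) :
    setDensity (edgeMaps (edgesIn (SimpleGraph.cycleGraph (n + 3)) S) G) ≤
      θ ^ #(edgesIn (SimpleGraph.cycleGraph (n + 3)) S) := by
  simp only [setDensity, indicator_edgeMaps, edgesIn_cycleGraph_of_last_notMem hS, prod_map,
    card_map]
  simpa [cycleEdge_apply, Fin.coeSucc_eq_succ, edgeKernel] using
    expect_kernelOp_pow_mul_prod_le edgeKernel_mem_Icc hw (r := 0) (zero_add _).le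
      {i | i.castSucc ∈ S ∧ i.succ ∈ S}

lemma exists_last_notMem_map_addRight {S : Finset (Fin (n + 1))} (hS : S ≠ univ) :
    ∃ a, Fin.last n ∉ S.map (addRightEmbedding a) := by
  obtain ⟨c, hc⟩ : ∃ c, c ∉ S := by simpa [eq_univ_iff_forall] using hS
  refine ⟨Fin.last n - c, fun h ↦ hc ?_⟩
  obtain ⟨i, hi, hic⟩ := mem_map.1 h
  rw [addRightEmbedding_apply, add_sub_left_comm, add_eq_left, sub_eq_zero] at hic
  exact hic ▸ hi

lemma edgesIn_cycleGraph_map_addRight (S : Finset (Fin (n + 3))) (a : Fin (n + 3)) :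
    edgesIn (SimpleGraph.cycleGraph (n + 3)) (S.map (addRightEmbedding a)) =
      (edgesIn (SimpleGraph.cycleGraph (n + 3)) S).map (addRightEmbedding a).sym2Map :=
  edgesIn_map _ fun u _ v _ ↦ by
    simp only [SimpleGraph.cycleGraph_adj, addRightEmbedding_apply, add_sub_add_right_eq_sub]

lemma card_edgesIn_cycleGraph_univ :
    #(edgesIn (SimpleGraph.cycleGraph (n + 3)) univ) = n + 3 := by
  rw [edgesIn_cycleGraph, card_map]
  simp

lemma card_edgesIn_cycleGraph_lt {S : Finset (Fin (n + 3))} (hS : S ≠ univ) :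
    #(edgesIn (SimpleGraph.cycleGraph (n + 3)) S) < n + 3 := by
  rw [edgesIn_cycleGraph, card_map]
  obtain ⟨c, hc⟩ : ∃ c, c ∉ S := by simpa [eq_univ_iff_forall] using hS
  simpa using card_lt_univ_of_notMem (s := {i | i ∈ S ∧ i + 1 ∈ S}) (x := c) (by simp [hc])

lemma setDensity_edgeMaps_cycleGraph_le {θ : ℝ}
    (hw : ∀ j ≤ n + 2, walkDensity (edgeKernel G) j ≤ θ ^ j) {S : Finset (Fin (n + 3))}
    (hS : S ≠ univ) :
    setDensity (edgeMaps (edgesIn (SimpleGraph.cycleGraph (n + 3)) S) G) ≤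
      θ ^ #(edgesIn (SimpleGraph.cycleGraph (n + 3)) S) := by
  obtain ⟨a, ha⟩ := exists_last_notMem_map_addRight hS
  have h := setDensity_edgeMaps_cycleGraph_le_of_last_notMem hw ha
  rwa [edgesIn_cycleGraph_map_addRight, setDensity_edgeMaps_map, card_map] at h

lemma extensionBound_cycleGraph_of_le {c d θ : ℝ} (hc₀ : 0 ≤ c) (hc₁ : c ≤ 1) (hd : 0 ≤ d)
    (hdθ : d ≤ θ) (hw : ∀ j ≤ n + 2, walkDensity (edgeKernel G) j ≤ θ ^ j)
    (hcycle : c * d * θ ^ (n + 2) ≤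
      setDensity (edgeMaps (edgesIn (SimpleGraph.cycleGraph (n + 3)) univ) G)) :
    ExtensionBound (SimpleGraph.cycleGraph (n + 3)) univ G c d := by
  have hθ : 0 ≤ θ := hd.trans hdθ
  intro S _
  obtain rfl | hS := eq_or_ne S univ
  · rw [mul_assoc]
    exact mul_le_of_le_one_left (mul_nonneg (by positivity) (setDensity_nonneg _)) hc₁
  have hS_le := setDensity_edgeMaps_cycleGraph_le hw hS
  have hcard := Nat.le_of_lt_succ (card_edgesIn_cycleGraph_lt hS)
  rw [card_edgesIn_cycleGraph_univ]
  set e := #(edgesIn (SimpleGraph.cycleGraph (n + 3)) S)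
  calc c * d ^ (n + 3) * setDensity (edgeMaps (edgesIn (SimpleGraph.cycleGraph (n + 3)) S) G)
      ≤ c * d ^ (n + 3) * θ ^ e := by gcongr
    _ = d ^ e * (c * d * (d ^ (n + 2 - e) * θ ^ e)) := by
        rw [show n + 3 = n + 2 - e + e + 1 by lia]
        ring
    _ ≤ d ^ e * (c * d * (θ ^ (n + 2 - e) * θ ^ e)) := by gcongr
    _ = d ^ e * (c * d * θ ^ (n + 2)) := by rw [← pow_add, Nat.sub_add_cancel hcard]
    _ ≤ _ := by gcongr

lemma LocallyDense.extensionBound_cycleGraph {ρ d ε : ℝ} (hG : LocallyDense G ρ d) {k : ℕ}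
    (hk : 1 ≤ k) (hd₀ : 0 < d) (hd₁ : d ≤ 1) (hε : ε ≤ 1) (hρ : ρ ^ 2 ≤ ε * d ^ (2 * k + 1)) :
    ExtensionBound (SimpleGraph.cycleGraph (2 * k + 1)) univ G (1 - ε) d := by
  obtain ⟨l, rfl⟩ := Nat.exists_eq_add_of_le' hk
  have hw₀ := walkDensity_nonneg (K := edgeKernel G) edgeKernel_mem_Icc
  obtain ⟨θ, hθ, hθw⟩ : ∃ θ, 0 ≤ θ ∧
      θ ^ (2 * (l + 1)) = walkDensity (edgeKernel G) (2 * (l + 1)) :=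
    ⟨_, Real.rpow_nonneg (hw₀ _) _, Real.rpow_inv_natCast_pow (hw₀ _) (by lia)⟩
  have hw (j : ℕ) (hj : j ≤ 2 * (l + 1)) : walkDensity (edgeKernel G) j ≤ θ ^ j :=
    walkDensity_le_pow edgeKernel_comm edgeKernel_mem_Icc hθ hθw.ge hj
  have hdθ : d ≤ θ := by
    have hρ₁ : ρ ≤ 1 := (abs_le.1 ((sq_le_one_iff_abs_le_one ρ).1
      (hρ.trans (mul_le_one₀ hε (by positivity) (pow_le_one₀ hd₀.le hd₁))))).2
    simpa using (hG.le_walkDensity_one hρ₁).trans (hw 1 (by lia))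
  have hε₀ : 0 ≤ ε := nonneg_of_mul_nonneg_left ((sq_nonneg ρ).trans hρ) (by positivity)
  have hcycle : (1 - ε) * d * θ ^ (2 * (l + 1)) ≤
      setDensity (edgeMaps (edgesIn (SimpleGraph.cycleGraph (2 * (l + 1) + 1)) univ) G) := by
    have hρθ : ρ ^ 2 ≤ ε * (d * θ ^ (2 * (l + 1))) := by
      refine hρ.trans ?_
      rw [pow_succ']
      gcongr
    calc (1 - ε) * d * θ ^ (2 * (l + 1)) ≤ d * θ ^ (2 * (l + 1)) - ρ ^ 2 := by linarith
      _ ≤ _ := by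
        rw [hθw]
        exact (hG.mul_walkDensity_sub_le hd₀.le hd₁ l).trans_eq setDensity_edgeMaps_cycleGraph.symm
  exact extensionBound_cycleGraph_of_le (sub_nonneg.2 hε) (sub_le_self _ hε₀) hd₀.le hdθ hw hcycle

end Cycle

lemma JDecomposable.edgeCount_ne_zero {α γ : Type*} [Finite α] [DecidableEq α]
    {H : SimpleGraph α} {J : SimpleGraph γ} (hH : JDecomposable H J) (hJ : J ≠ ⊥) :
    edgeCount H ≠ 0 := by
  obtain ⟨ι, _, bag, T, h⟩ := hH
  obtain ⟨X⟩ := h.1.1.connected.nonempty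
  obtain ⟨e⟩ := h.2.1 X
  obtain ⟨u, v, huv⟩ := SimpleGraph.ne_bot_iff_exists_adj.1 hJ
  have hadj := e.symm.map_adj_iff.2 huv
  have : Nonempty H.edgeSet := ⟨⟨s(_, _), hadj⟩⟩
  exact Nat.card_pos.ne'

lemma cycleGraph_ne_bot {n : ℕ} (hn : 2 ≤ n) : SimpleGraph.cycleGraph n ≠ ⊥ := by
  obtain ⟨m, rfl⟩ := Nat.exists_eq_add_of_le' hn
  exact SimpleGraph.ne_bot_iff_exists_adj.2 ⟨1, 0, SimpleGraph.cycleGraph_adj.2 (.inl (sub_zero 1))⟩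

lemma homDensity_nonneg {α β : Type*} [Fintype α] [Fintype β] (H : SimpleGraph α)
    (G : SimpleGraph β) : 0 ≤ homDensity H G := by
  unfold homDensity
  positivity

lemma pow_sub_le_one_sub_div_pow_mul {d η : ℝ} {N e : ℕ} (hN : N ≠ 0) (hd₀ : 0 ≤ d) (hd₁ : d ≤ 1)
    (hη : 0 ≤ η) (hηN : η ≤ N) : d ^ e - η ≤ (1 - η / N) ^ N * d ^ e := by
  have hbernoulli : 1 - η ≤ (1 - η / N) ^ N := by
    have hN₀ : (0 : ℝ) < N := by positivity
    have h := one_add_mul_le_pow (a := -(η / N)) (by linarith [(div_le_one hN₀).2 hηN]) N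
    rwa [mul_neg, mul_div_cancel₀ _ hN₀.ne', ← sub_eq_add_neg, ← sub_eq_add_neg] at h
  calc d ^ e - η ≤ d ^ e - η * d ^ e :=
        sub_le_sub_left (mul_le_of_le_one_right hη (pow_le_one₀ hd₀ hd₁)) _
    _ = (1 - η) * d ^ e := by ring
    _ ≤ (1 - η / N) ^ N * d ^ e := by gcongr

theorem stmt2 {α : Type*} [Fintype α] [DecidableEq α] (k : ℕ) (hk : 1 ≤ k)
    (H : SimpleGraph α)
    (hH : JDecomposable H (SimpleGraph.cycleGraph (2 * k + 1)))
    (η : ℝ) (hη : 0 < η) :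
    ∃ (ρ : ℝ) (n₀ : ℕ), 0 < ρ ∧
      ∀ (d : ℝ), 0 < d → d ≤ 1 →
        ∀ (β : Type) [Fintype β] (G : SimpleGraph β),
          n₀ ≤ Fintype.card β → LocallyDense G ρ d →
            homDensity H G ≥ d ^ edgeCount H - η := by
  have he : edgeCount H ≠ 0 := hH.edgeCount_ne_zero (cycleGraph_ne_bot (by lia))
  obtain ⟨ι, _, bag, T, h⟩ := hH
  have : Nonempty ι := h.1.1.connected.nonempty
  set N := Fintype.card ι
  have hN : 1 ≤ N := Fintype.card_pos
  refine ⟨η / N * η ^ (2 * k + 1), 1, by positivity, fun d hd₀ hd₁ β _ G hβ hG ↦ ?_⟩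
  have : Nonempty β := Fintype.card_pos_iff.1 hβ
  obtain hdη | hηd := le_or_gt d η
  · exact (sub_nonpos.2 ((pow_le_of_le_one hd₀.le hd₁ he).trans hdη)).trans (homDensity_nonneg H G)
  have hη₁ : η < 1 := hηd.trans_le hd₁
  have hε : η / N ≤ η := div_le_self hη.le (mod_cast hN)
  have hρ₁ : η / N * η ^ (2 * k + 1) ≤ 1 :=
    mul_le_one₀ (hε.trans hη₁.le) (by positivity) (pow_le_one₀ hη.le hη₁.le)
  have hρ : (η / N * η ^ (2 * k + 1)) ^ 2 ≤ η / N * d ^ (2 * k + 1) :=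
    (pow_le_of_le_one (by positivity) hρ₁ two_ne_zero).trans (by gcongr)
  calc d ^ edgeCount H - η ≤ (1 - η / N) ^ N * d ^ edgeCount H :=
        pow_sub_le_one_sub_div_pow_mul (by lia) hd₀.le hd₁ hη.le (hη₁.le.trans (mod_cast hN))
    _ ≤ homDensity H G := h.pow_mul_pow_le_homDensity (sub_pos.2 (hε.trans_lt hη₁)) hd₀
        (hG.extensionBound_cycleGraph hk hd₀ hd₁ (hε.trans hη₁.le) hρ)
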